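/- Let b ∈ GL_n(E) be an invertible block upper-triangular matrix. Then dim_E(𝔭_{S_0} ∩ Ad_{b w_0}(𝔟)) = Σ_{a=1}^{s} r_a(r_a+1)/2 and dim_E((𝔷_{S_0} + 𝔫_{S_0}) ∩ Ad_{b w_0}(𝔟)) = s, where Ad_{b w_0}(𝔟) = Ad_b(𝔟̄). (These are the dimensions of Hom_{Fil,F_u}(D_σ, D_σ) = Ad_u(𝔭_{S_0,σ}) ∩ Ad_{g_σ}(𝔟_σ) and of Hom°_{Fil,F_u}(D_σ, D_σ) = Ad_u(τ_{S_0,σ}) ∩ Ad_{g_σ}(𝔟_σ) at a non-critical point; for the two-block composition (i, n−i) the second gives dim_E Hom^i_{Fil,F_u}(D_σ, D_σ) = 2.) -/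

import Mathlib

open Matrix

/-- The `E`-subspace of `n × n` matrices supported on the entries `(i, j)` where `P i j` holds. -/
def entrySub (E : Type*) [Field E] (n : ℕ) (P : Fin n → Fin n → Prop) :
    Submodule E (Matrix (Fin n) (Fin n) E) where
  carrier := {M | ∀ i j, ¬ P i j → M i j = 0}
  add_mem' := by
    intro M N hM hN i j hij
    simp only [Matrix.add_apply, hM i j hij, hN i j hij, add_zero]
  zero_mem' := by
    intro i j _
    simp
  smul_mem' := by
    intro c M hM i j hij
    simp only [Matrix.smul_apply, hM i j hij, smul_zero]

/-- The Borel subalgebra `𝔟` of upper-triangular matrices. -/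
def upperTri (E : Type*) [Field E] (n : ℕ) : Submodule E (Matrix (Fin n) (Fin n) E) :=
  entrySub E n fun i j => i ≤ j

/-- `𝔭_{S_0} = {M : M_{mk} = 0 whenever β(m) > β(k)}`, the standard block upper-triangular
(parabolic) subalgebra. -/
def parab (E : Type*) [Field E] {n s : ℕ} (β : Fin n → Fin s) :
    Submodule E (Matrix (Fin n) (Fin n) E) :=
  entrySub E n fun i j => β i ≤ β j

/-- `𝔫_{S_0} = {M : M_{mk} = 0 unless β(m) < β(k)}`, the nilpotent radical of `𝔭_{S_0}`. -/
def nilrad (E : Type*) [Field E] {n s : ℕ} (β : Fin n → Fin s) :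
    Submodule E (Matrix (Fin n) (Fin n) E) :=
  entrySub E n fun i j => β i < β j

/-- The linear map `(c : Fin s → E) ↦ diagonal (c ∘ β)`. -/
def blockDiagMap (E : Type*) [Field E] {n s : ℕ} (β : Fin n → Fin s) :
    (Fin s → E) →ₗ[E] Matrix (Fin n) (Fin n) E where
  toFun c := Matrix.diagonal fun m => c (β m)
  map_add' c c' := by
    ext i j
    by_cases h : i = j <;>
      simp [Matrix.diagonal_apply, Matrix.add_apply, h]
  map_smul' t c := by
    ext i j
    by_cases h : i = j <;>
      simp [Matrix.diagonal_apply, Matrix.smul_apply, h]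

/-- `𝔷_{S_0}`, the diagonal matrices whose diagonal entries are constant on each block. -/
def centerLevi (E : Type*) [Field E] {n s : ℕ} (β : Fin n → Fin s) :
    Submodule E (Matrix (Fin n) (Fin n) E) :=
  LinearMap.range (blockDiagMap E β)

/-- `Ad_g(W) = g W g⁻¹`. -/
noncomputable def adConj {E : Type*} [Field E] {n : ℕ} (g : Matrix (Fin n) (Fin n) E)
    (W : Submodule E (Matrix (Fin n) (Fin n) E)) : Submodule E (Matrix (Fin n) (Fin n) E) :=
  W.map ((LinearMap.mulLeft E g).comp (LinearMap.mulRight E g⁻¹))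

/-- The antidiagonal permutation matrix `w₀`, with `(w₀)_{m, n+1−m} = 1`. -/
def w0Mat (E : Type*) [Field E] (n : ℕ) : Matrix (Fin n) (Fin n) E :=
  Matrix.of fun i j => if j = i.rev then 1 else 0

/-!
Since `Ad_{w₀}(𝔟) = 𝔟̄` and `b` normalises both `𝔭` and `𝔷 + 𝔫`, each intersection is the conjugate
by `b` of an intersection with `𝔟̄`, so conjugation may be dropped when computing dimensions.
Because `β` is monotone, `𝔭 ∩ 𝔟̄` consists of the block-diagonal lower-triangular matrices, which
contribute `r_a (r_a + 1) / 2` free entries per block, while `𝔫 ∩ 𝔟̄ = 0`; as `𝔷 ⊆ 𝔟̄`, the modular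
law gives `(𝔷 + 𝔫) ∩ 𝔟̄ = 𝔷`.
-/

theorem card_product_filter_snd_le_fst {ι : Type*} [LinearOrder ι] (S : Finset ι) :
    ((S ×ˢ S).filter fun p => p.2 ≤ p.1).card = (S.card + 1).choose 2 := by
  rw [← Finset.card_sym2]
  refine Finset.card_bij (fun p _ => s(p.1, p.2)) ?mapsTo ?injective ?surjective
  case mapsTo =>
    intro p hp
    simpa using (Finset.mem_filter.1 hp).1
  case injective =>
    rintro ⟨i, j⟩ hij ⟨k, l⟩ hkl h
    have hji : j ≤ i := (Finset.mem_filter.1 hij).2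
    have hlk : l ≤ k := (Finset.mem_filter.1 hkl).2
    rcases Sym2.eq_iff.1 h with ⟨rfl, rfl⟩ | ⟨rfl, rfl⟩
    · rfl
    · rw [le_antisymm hji hlk]
  case surjective =>
    intro z
    induction z with | _ i j
    intro hz
    obtain ⟨hi, hj⟩ := Finset.mk_mem_sym2_iff.1 hz
    rcases le_total j i with h | h
    · exact ⟨(i, j), by simp [hi, hj, h], rfl⟩
    · exact ⟨(j, i), by simp [hi, hj, h], Sym2.eq_swap⟩

theorem card_filter_eq_and_snd_le_fst {ι κ : Type*} [Fintype ι] [LinearOrder ι] [Fintype κ]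
    [DecidableEq κ] (f : ι → κ) :
    (Finset.univ.filter fun p : ι × ι => f p.1 = f p.2 ∧ p.2 ≤ p.1).card
      = ∑ a, ((Finset.univ.filter fun i => f i = a).card + 1).choose 2 := by
  rw [Finset.card_eq_sum_card_fiberwise (f := fun p => f p.1) (t := Finset.univ)
    fun _ _ => Finset.mem_coe.2 (Finset.mem_univ _)]
  refine Finset.sum_congr rfl fun a _ => ?_
  rw [← card_product_filter_snd_le_fst]
  congr 1
  ext ⟨i, j⟩
  simp only [Finset.mem_filter, Finset.mem_univ, true_and, Finset.mem_product]
  grind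

section EntrySub

variable {E : Type*} [Field E] {n : ℕ} {P Q R : Fin n → Fin n → Prop}
  {M N : Matrix (Fin n) (Fin n) E}

theorem mul_mem_entrySub (hM : M ∈ entrySub E n P) (hN : N ∈ entrySub E n Q)
    (hPQR : ∀ i k j, P i k → Q k j → R i j) : M * N ∈ entrySub E n R := by
  intro i j hij
  rw [Matrix.mul_apply]
  refine Finset.sum_eq_zero fun k _ => ?_
  by_cases hik : P i k
  · rw [hN k j fun hkj => hij (hPQR i k j hik hkj), mul_zero]
  · rw [hM i k hik, zero_mul]

variable (P Q) in
theorem entrySub_inf : entrySub E n P ⊓ entrySub E n Q = entrySub E n fun i j => P i j ∧ Q i j := by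
  ext M
  constructor
  · rintro ⟨hP, hQ⟩ i j hij
    rcases not_and_or.1 hij with h | h
    exacts [hP i j h, hQ i j h]
  · intro h
    exact ⟨fun i j hP => h i j (mt And.left hP), fun i j hQ => h i j (mt And.right hQ)⟩

theorem entrySub_false : entrySub E n (fun _ _ => False) = ⊥ :=
  (Submodule.eq_bot_iff _).2 fun _ hM => Matrix.ext fun i j => hM i j not_false

variable (E P) in
/-- The coordinates of a matrix supported on `P`: its entries at the positions in `P`. -/
def entrySubEquiv [∀ i j, Decidable (P i j)] :
    entrySub E n P ≃ₗ[E] ({p : Fin n × Fin n // P p.1 p.2} → E) where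
  toFun M p := M.1 p.1.1 p.1.2
  map_add' _ _ := rfl
  map_smul' _ _ := rfl
  invFun f :=
    ⟨Matrix.of fun i j => if h : P i j then f ⟨(i, j), h⟩ else 0, fun i j h => by simp [h]⟩
  left_inv := by
    rintro ⟨M, hM⟩
    ext i j
    by_cases h : P i j
    · simp [h]
    · simp [h, hM i j h]
  right_inv f := by
    ext ⟨p, hp⟩
    simp [hp]

variable (E P) in
theorem finrank_entrySub [∀ i j, Decidable (P i j)] :
    Module.finrank E (entrySub E n P)
      = (Finset.univ.filter fun p : Fin n × Fin n => P p.1 p.2).card := by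
  rw [(entrySubEquiv E P).finrank_eq, Module.finrank_fintype_fun_eq_card, Fintype.card_subtype]

end EntrySub

theorem inv_mul_conj_mul_cancel {m R : Type*} [Fintype m] [DecidableEq m] [CommRing R]
    {g : Matrix m m R} (hg : IsUnit g.det) (M : Matrix m m R) :
    g⁻¹ * (g * (M * g⁻¹)) * g = M := by
  rw [Matrix.nonsing_inv_mul_cancel_left g _ hg, Matrix.nonsing_inv_mul_cancel_right g _ hg]

section AdConj

variable {E : Type*} [Field E] {n : ℕ} {g : Matrix (Fin n) (Fin n) E}
  {V : Submodule E (Matrix (Fin n) (Fin n) E)}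

theorem mem_adConj_iff (hg : IsUnit g.det) {M : Matrix (Fin n) (Fin n) E} :
    M ∈ adConj g V ↔ g⁻¹ * M * g ∈ V := by
  constructor
  · rintro ⟨N, hN, rfl⟩
    exact (inv_mul_conj_mul_cancel hg N).symm ▸ hN
  · refine fun h => ⟨_, h, ?_⟩
    change g * (g⁻¹ * M * g * g⁻¹) = M
    rw [Matrix.mul_nonsing_inv_cancel_right g _ hg, Matrix.mul_nonsing_inv_cancel_left g _ hg]

theorem adConj_mul (g h : Matrix (Fin n) (Fin n) E)
    (V : Submodule E (Matrix (Fin n) (Fin n) E)) :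
    adConj (g * h) V = adConj g (adConj h V) := by
  unfold adConj
  rw [← Submodule.map_comp]
  congr 1
  ext1 M
  simp [Matrix.mul_inv_rev, mul_assoc]

theorem adConj_inf (hg : IsUnit g.det) (V W : Submodule E (Matrix (Fin n) (Fin n) E)) :
    adConj g (V ⊓ W) = adConj g V ⊓ adConj g W := by
  ext M
  simp only [Submodule.mem_inf, mem_adConj_iff hg]

theorem finrank_adConj (hg : IsUnit g.det) (V : Submodule E (Matrix (Fin n) (Fin n) E)) :
    Module.finrank E (adConj g V) = Module.finrank E V := by
  refine (Submodule.equivMapOfInjective _ ?_ V).finrank_eq.symm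
  exact Function.LeftInverse.injective (g := fun M => g⁻¹ * M * g) (inv_mul_conj_mul_cancel hg)

theorem finrank_inf_adConj_of_adConj_le (hg : IsUnit g.det) (hV : adConj g V ≤ V)
    (W : Submodule E (Matrix (Fin n) (Fin n) E)) :
    Module.finrank E (V ⊓ adConj g W : Submodule E (Matrix (Fin n) (Fin n) E))
      = Module.finrank E (V ⊓ W : Submodule E (Matrix (Fin n) (Fin n) E)) := by
  have hVV : adConj g V = V := Submodule.eq_of_le_of_finrank_eq hV (finrank_adConj hg V)
  conv_lhs => rw [← hVV, ← adConj_inf hg, finrank_adConj hg]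

end AdConj

section LowerTri

variable (E : Type*) [Field E] (n : ℕ)

/-- The opposite Borel subalgebra `𝔟̄` of lower-triangular matrices. -/
def lowerTri : Submodule E (Matrix (Fin n) (Fin n) E) :=
  entrySub E n fun i j => j ≤ i

theorem w0Mat_eq_permMatrix : w0Mat E n = (Fin.revPerm : Equiv.Perm (Fin n)).permMatrix E := by
  ext i j
  simp [w0Mat, Equiv.Perm.permMatrix, PEquiv.toMatrix_apply, eq_comm]

variable {E n} in
theorem w0Mat_mul_mul_w0Mat (M : Matrix (Fin n) (Fin n) E) :
    w0Mat E n * M * w0Mat E n = M.submatrix Fin.rev Fin.rev := by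
  rw [w0Mat_eq_permMatrix, Equiv.Perm.permMatrix, PEquiv.toMatrix_toPEquiv_mul,
    PEquiv.mul_toMatrix_toPEquiv]
  rfl

theorem w0Mat_mul_self : w0Mat E n * w0Mat E n = 1 := by
  simpa [Matrix.submatrix_one _ Fin.rev_injective] using
    w0Mat_mul_mul_w0Mat (1 : Matrix (Fin n) (Fin n) E)

theorem adConj_w0Mat_upperTri : adConj (w0Mat E n) (upperTri E n) = lowerTri E n := by
  have hdet : IsUnit (w0Mat E n).det := Matrix.isUnit_det_of_left_inverse (w0Mat_mul_self E n)
  ext M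
  rw [mem_adConj_iff hdet, Matrix.inv_eq_left_inv (w0Mat_mul_self E n), w0Mat_mul_mul_w0Mat]
  refine Fin.revPerm.forall_congr fun i => Fin.revPerm.forall_congr fun j => ?_
  simp [Fin.rev_le_rev]

end LowerTri

section Parabolic

variable {E : Type*} [Field E] {n s : ℕ} {β : Fin n → Fin s}
  {M N b : Matrix (Fin n) (Fin n) E}

theorem mem_parab_iff_blockTriangular : M ∈ parab E β ↔ M.BlockTriangular β :=
  forall₂_congr fun _ _ => by rw [not_le]

theorem inv_mem_parab (hdet : IsUnit b.det) (hb : b ∈ parab E β) : b⁻¹ ∈ parab E β := by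
  have := Matrix.invertibleOfIsUnitDet b hdet
  exact mem_parab_iff_blockTriangular.2
    (Matrix.blockTriangular_inv_of_blockTriangular (mem_parab_iff_blockTriangular.1 hb))

theorem mul_mem_parab (hM : M ∈ parab E β) (hN : N ∈ parab E β) : M * N ∈ parab E β :=
  mul_mem_entrySub hM hN fun _ _ _ => le_trans

theorem mul_mem_nilrad_of_mem_parab_left (hM : M ∈ parab E β) (hN : N ∈ nilrad E β) :
    M * N ∈ nilrad E β :=
  mul_mem_entrySub hM hN fun _ _ _ => lt_of_le_of_lt

theorem mul_mem_nilrad_of_mem_parab_right (hM : M ∈ nilrad E β) (hN : N ∈ parab E β) :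
    M * N ∈ nilrad E β :=
  mul_mem_entrySub hM hN fun _ _ _ => lt_of_lt_of_le

theorem mul_blockDiagMap_sub_blockDiagMap_mul_mem_nilrad (hM : M ∈ parab E β) (c : Fin s → E) :
    M * blockDiagMap E β c - blockDiagMap E β c * M ∈ nilrad E β := by
  intro i j hij
  change (M * Matrix.diagonal fun m => c (β m)) i j
    - (Matrix.diagonal (fun m => c (β m)) * M) i j = 0
  rw [Matrix.mul_diagonal, Matrix.diagonal_mul]
  rcases (not_lt.1 hij).eq_or_lt with h | h
  · rw [h, mul_comm, sub_self]
  · rw [hM i j h.not_ge, zero_mul, mul_zero, sub_zero]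

theorem adConj_parab_le (hdet : IsUnit b.det) (hb : b ∈ parab E β) :
    adConj b (parab E β) ≤ parab E β := by
  rintro _ ⟨M, hM, rfl⟩
  exact mul_mem_parab hb (mul_mem_parab hM (inv_mem_parab hdet hb))

theorem adConj_nilrad_le (hdet : IsUnit b.det) (hb : b ∈ parab E β) :
    adConj b (nilrad E β) ≤ nilrad E β := by
  rintro _ ⟨M, hM, rfl⟩
  exact mul_mem_nilrad_of_mem_parab_left hb
    (mul_mem_nilrad_of_mem_parab_right hM (inv_mem_parab hdet hb))

theorem adConj_centerLevi_le (hdet : IsUnit b.det) (hb : b ∈ parab E β) :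
    adConj b (centerLevi E β) ≤ centerLevi E β ⊔ nilrad E β := by
  rintro _ ⟨_, ⟨c, rfl⟩, rfl⟩
  set D := blockDiagMap E β c
  have hconj : b * (D * b⁻¹) = D + (b * D - D * b) * b⁻¹ := by
    rw [sub_mul, mul_assoc D, Matrix.mul_nonsing_inv b hdet, mul_one, mul_assoc, add_sub_cancel]
  change b * (D * b⁻¹) ∈ _
  rw [hconj]
  exact Submodule.add_mem_sup ⟨c, rfl⟩ (mul_mem_nilrad_of_mem_parab_right
    (mul_blockDiagMap_sub_blockDiagMap_mul_mem_nilrad hb c) (inv_mem_parab hdet hb))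

theorem adConj_centerLevi_sup_nilrad_le (hdet : IsUnit b.det) (hb : b ∈ parab E β) :
    adConj b (centerLevi E β ⊔ nilrad E β) ≤ centerLevi E β ⊔ nilrad E β := by
  rw [adConj, Submodule.map_sup]
  exact sup_le (adConj_centerLevi_le hdet hb) ((adConj_nilrad_le hdet hb).trans le_sup_right)

variable (E)

theorem parab_inf_lowerTri (hβ : Monotone β) :
    parab E β ⊓ lowerTri E n = entrySub E n fun i j => β i = β j ∧ j ≤ i := by
  rw [parab, lowerTri, entrySub_inf]
  congr! 3 with i j
  exact and_congr_left fun hji => ⟨fun hij => hij.antisymm (hβ hji), le_of_eq⟩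

theorem nilrad_inf_lowerTri (hβ : Monotone β) : nilrad E β ⊓ lowerTri E n = ⊥ := by
  rw [nilrad, lowerTri, entrySub_inf, ← entrySub_false]
  congr! 3 with i j
  exact iff_false_intro fun h => (hβ h.2).not_gt h.1

variable (β) in
theorem centerLevi_le_lowerTri : centerLevi E β ≤ lowerTri E n := by
  rintro _ ⟨c, rfl⟩ i j hij
  exact Matrix.diagonal_apply_ne _ fun h => hij h.ge

theorem centerLevi_sup_nilrad_inf_lowerTri (hβ : Monotone β) :
    (centerLevi E β ⊔ nilrad E β) ⊓ lowerTri E n = centerLevi E β := by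
  rw [sup_inf_assoc_of_le _ (centerLevi_le_lowerTri E β), nilrad_inf_lowerTri E hβ, sup_bot_eq]

theorem blockDiagMap_injective (hβ : Function.Surjective β) :
    Function.Injective (blockDiagMap E β) :=
  Matrix.diagonal_injective.comp hβ.injective_comp_right

theorem finrank_centerLevi (hβ : Function.Surjective β) :
    Module.finrank E (centerLevi E β) = s := by
  rw [centerLevi, LinearMap.finrank_range_of_inj (blockDiagMap_injective E hβ),
    Module.finrank_fin_fun]

theorem finrank_parab_inf_lowerTri (hβ : Monotone β) :
    Module.finrank E (parab E β ⊓ lowerTri E n : Submodule E (Matrix (Fin n) (Fin n) E))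
      = ∑ a, ((Finset.univ.filter fun m => β m = a).card + 1).choose 2 := by
  rw [parab_inf_lowerTri E hβ, finrank_entrySub, card_filter_eq_and_snd_le_fst]

end Parabolic

/-- Let `b ∈ GL_n(E)` be an invertible block upper-triangular matrix.  Then
`dim_E(𝔭_{S_0} ∩ Ad_{b w₀}(𝔟)) = Σ_{a=1}^{s} r_a(r_a+1)/2` and
`dim_E((𝔷_{S_0} + 𝔫_{S_0}) ∩ Ad_{b w₀}(𝔟)) = s`, where `r_a = |β⁻¹(a)|` is the size of the `a`-th
block. -/
theorem statement_10 (E : Type*) [Field E] (n s : ℕ) (hs : 1 ≤ s)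
    (β : Fin n → Fin s) (hβmono : Monotone β) (hβsurj : Function.Surjective β)
    (b : Matrix (Fin n) (Fin n) E) (hbunit : IsUnit b.det) (hbpar : b ∈ parab E β) :
    Module.finrank E (parab E β ⊓ adConj (b * w0Mat E n) (upperTri E n) :
        Submodule E (Matrix (Fin n) (Fin n) E))
      = ∑ a : Fin s, (Finset.univ.filter fun m : Fin n => β m = a).card *
          ((Finset.univ.filter fun m : Fin n => β m = a).card + 1) / 2 ∧
    Module.finrank E ((centerLevi E β ⊔ nilrad E β) ⊓ adConj (b * w0Mat E n) (upperTri E n) :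
        Submodule E (Matrix (Fin n) (Fin n) E))
      = s := by
  rw [adConj_mul, adConj_w0Mat_upperTri]
  constructor
  · rw [finrank_inf_adConj_of_adConj_le hbunit (adConj_parab_le hbunit hbpar),
      finrank_parab_inf_lowerTri E hβmono]
    simp only [Nat.choose_two_right, add_tsub_cancel_right, mul_comm]
  · rw [finrank_inf_adConj_of_adConj_le hbunit (adConj_centerLevi_sup_nilrad_le hbunit hbpar),
      centerLevi_sup_nilrad_inf_lowerTri E hβmono, finrank_centerLevi E hβsurj]
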